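/- In ℝ², let 1 < k < 2 and let V^k be the space with norm ‖v;V^k‖ = ‖⟨ω⟩^k v‖₂ ∨ ‖⟨ω⟩^{k−1} xv‖₂. Then ‖ω^{2k−2}(x v₁ v₂)‖_{L²} ≤ C ‖v₁; V^k‖ ‖v₂; V^k‖ for all v₁, v₂ ∈ V^k (with xv₁v₂ meaning the product x·v₁ v₂ componentwise). -/

import Mathlib

open MeasureTheory Complex
open scoped FourierTransform ENNReal

noncomputable section

abbrev V2 := EuclideanSpace ℝ (Fin 2)

/-- `ω^ℓ = (−Δ)^{ℓ/2}` on `ℝ²`, as the Fourier multiplier `|ξ|^ℓ`. -/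
def omMul (ℓ : ℝ) (f : V2 → ℂ) : V2 → ℂ :=
  𝓕⁻ (fun ξ => (((2 * Real.pi * ‖ξ‖) ^ ℓ : ℝ) : ℂ) * 𝓕 f ξ)

/-- `⟨ω⟩^k = (1−Δ)^{k/2}` as a Fourier multiplier. -/
def japMul (k : ℝ) (f : V2 → ℂ) : V2 → ℂ :=
  𝓕⁻ (fun ξ => (((1 + (2 * Real.pi * ‖ξ‖) ^ 2) ^ (k / 2) : ℝ) : ℂ) * 𝓕 f ξ)

/-- The `V^k` norm `‖⟨ω⟩^k v‖₂ ∨ ‖⟨ω⟩^{k−1} x v‖₂`. -/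
def VkNorm (k : ℝ) (f : V2 → ℂ) : ℝ≥0∞ :=
  eLpNorm (japMul k f) 2 volume ⊔
    eLpNorm (fun x : V2 => (WithLp.equiv 2 (Fin 2 → ℂ)).symm
      (fun j => japMul (k - 1) (fun y => (y j : ℂ) * f y) x)) 2 volume

open SchwartzMap in
lemma planch (g : V2 → ℂ) (h1 : Integrable g) (h2 : MemLp g 2 volume) :
    eLpNorm (𝓕⁻ g) 2 volume = eLpNorm g 2 volume := by
  set G : Lp ℂ 2 (volume : Measure V2) := h2.toLp g with hG
  have hcont : Continuous (𝓕⁻ g) := by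
    have : 𝓕⁻ g = fun v => 𝓕 g (-v) := by
      ext v; exact Real.fourierInv_eq_fourier_neg g v
    rw [this]
    exact (VectorFourier.fourierIntegral_continuous Real.continuous_fourierChar
      (by exact continuous_inner) h1).comp continuous_neg
  have key : ∀ᵐ x, (𝓕⁻ g) x = (𝓕⁻ G : Lp ℂ 2 (volume : Measure V2)) x := by
    apply ae_eq_of_integral_contDiff_smul_eq
    · exact hcont.locallyIntegrable
    · exact (Lp.memLp _).locallyIntegrable (by norm_num)
    · intro φ hφ hφc
      have hc : HasCompactSupport (fun x => (φ x : ℂ)) := hφc.comp_left (g := fun r : ℝ => (r : ℂ)) (by simp)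
      have hs : ContDiff ℝ ((⊤ : ℕ∞) : WithTop ℕ∞) (fun x => (φ x : ℂ)) := Complex.ofRealCLM.contDiff.comp hφ
      set Φ : 𝓢(V2, ℂ) := hc.toSchwartzMap hs with hΦ
      have hΦa : ∀ x, Φ x = (φ x : ℂ) := fun x => rfl
      have e := congrArg (fun T => T Φ) (MeasureTheory.Lp.fourierInv_toTemperedDistribution_eq G)
      simp only [TemperedDistribution.fourierInv_apply, Lp.toTemperedDistribution_apply] at e
      have e2 : ∫ x, (𝓕⁻ Φ) x • G x = ∫ x, (𝓕⁻ Φ) x • g x := by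
        apply integral_congr_ae
        filter_upwards [h2.coeFn_toLp] with x hx
        rw [hG, hx]
      have e3 : ∫ x, (𝓕⁻ Φ) x • g x = ∫ x, Φ x • (𝓕⁻ g) x := by
        have := VectorFourier.integral_fourierIntegral_smul_eq_flip (L := -innerₗ V2) (f := Φ) (g := g) (μ := volume) (ν := volume) Real.continuous_fourierChar (by simpa using! continuous_inner.neg) Φ.integrable h1
        have hfl : (-innerₗ V2 : V2 →ₗ[ℝ] V2 →ₗ[ℝ] ℝ).flip = -innerₗ V2 := by
          ext; simp [real_inner_comm]
        rw [hfl] at this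
        simp only [fourierInv_coe]
        exact this
      have e4 : ∫ x, φ x • (𝓕⁻ g) x = ∫ x, Φ x • (𝓕⁻ g) x := by
        simp [hΦa]
      have e5 : ∫ x, φ x • (𝓕⁻ G : Lp ℂ 2 (volume : Measure V2)) x = ∫ x, Φ x • (𝓕⁻ G : Lp ℂ 2 (volume : Measure V2)) x := by
        simp [hΦa]
      rw [e4, e5, ← e3, ← e2, e]
  rw [eLpNorm_congr_ae key]
  have : ‖(𝓕⁻ G : Lp ℂ 2 (volume : Measure V2))‖ = ‖G‖ := (Lp.fourierTransformₗᵢ V2 ℂ).symm.norm_map G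
  rw [← eLpNorm_congr_ae h2.coeFn_toLp, ← ENNReal.toReal_eq_toReal_iff' (Lp.eLpNorm_ne_top _) (Lp.eLpNorm_ne_top _)]
  rw [← Lp.norm_def, ← Lp.norm_def]; exact this

open SchwartzMap LineDeriv in
lemma exists_xmul (v : 𝓢(V2, ℂ)) (j : Fin 2) : ∃ w : 𝓢(V2, ℂ), (∀ x, w x = (x j : ℂ) * v x) ∧
    ∀ ξ, fderiv ℝ (𝓕 v : 𝓢(V2, ℂ)) ξ (EuclideanSpace.single j 1) = -(2 * Real.pi * I) * (𝓕 w : 𝓢(V2, ℂ)) ξ := by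
  have ht : (fun x : V2 => inner ℝ x (EuclideanSpace.single j (1:ℝ))).HasTemperateGrowth := by fun_prop
  refine ⟨smulLeftCLM ℂ (fun x : V2 => inner ℝ x (EuclideanSpace.single j (1:ℝ))) v, ?_, ?_⟩
  · intro x
    rw [smulLeftCLM_apply_apply ht]
    simp [EuclideanSpace.inner_single_right]
  · intro ξ
    rw [← lineDerivOp_apply_eq_fderiv, lineDerivOp_fourier_eq, FourierTransform.fourier_smul]
    simp

open SchwartzMap in
lemma fourier_mul (w v : 𝓢(V2, ℂ)) (ξ : V2) :
    𝓕 (fun x => w x * v x) ξ = ∫ η, (𝓕 w : 𝓢(V2, ℂ)) (ξ - η) * (𝓕 v : 𝓢(V2, ℂ)) η := by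
  have h := convolution_apply (ContinuousLinearMap.mul ℂ ℂ) (𝓕 v : 𝓢(V2, ℂ)) (𝓕 w : 𝓢(V2, ℂ)) ξ
  have h2 : (∫ η, (𝓕 w : 𝓢(V2, ℂ)) (ξ - η) * (𝓕 v : 𝓢(V2, ℂ)) η) = convolution (ContinuousLinearMap.mul ℂ ℂ) (𝓕 v : 𝓢(V2, ℂ)) (𝓕 w : 𝓢(V2, ℂ)) ξ := by
    rw [h, MeasureTheory.convolution]
    simp [mul_comm]
  have hf : ∀ (u : 𝓢(V2, ℂ)) x, (𝓕 (𝓕 u : 𝓢(V2, ℂ)) : 𝓢(V2, ℂ)) x = u (-x) := by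
    intro u x
    have : (𝓕⁻ (𝓕 u : 𝓢(V2, ℂ)) : 𝓢(V2, ℂ)) (-x) = u (-x) := by simp
    rw [← this, fourierInv_coe, Real.fourierInv_eq_fourier_neg, neg_neg, fourier_coe]
  rw [h2]
  have h3 : convolution (ContinuousLinearMap.mul ℂ ℂ) (𝓕 v : 𝓢(V2, ℂ)) (𝓕 w : 𝓢(V2, ℂ)) =
    𝓕⁻ (pairing (ContinuousLinearMap.mul ℂ ℂ) (𝓕 (𝓕 v : 𝓢(V2, ℂ)) : 𝓢(V2, ℂ)) (𝓕 (𝓕 w : 𝓢(V2, ℂ)) : 𝓢(V2, ℂ))) := rfl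
  rw [h3, fourierInv_coe, Real.fourierInv_eq_fourier_comp_neg]
  refine congrArg (fun f : V2 → ℂ => 𝓕 f ξ) ?_
  ext x
  simp [hf, mul_comm]

/-- `⟨2πη⟩²`. -/
def JJ (η : V2) : ℝ := 1 + (2 * Real.pi * ‖η‖) ^ 2

lemma JJ_ge (η : V2) : 1 ≤ JJ η := by unfold JJ; nlinarith [sq_nonneg (2 * Real.pi * ‖η‖)]
lemma JJ_pos (η : V2) : 0 < JJ η := lt_of_lt_of_le one_pos (JJ_ge η)
lemma JJ_cont : Continuous JJ := by unfold JJ; fun_prop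

def DD (ξ η : V2) : ℝ := JJ (ξ - η) + JJ η
lemma DD_pos (ξ η : V2) : 0 < DD ξ η := add_pos (JJ_pos _) (JJ_pos _)
lemma DD_cont (ξ : V2) : Continuous (DD ξ) := by
  unfold DD; exact (JJ_cont.comp (by fun_prop)).add JJ_cont

def JD (η e : V2) : ℝ := (2 * Real.pi) ^ 2 * (2 * inner ℝ η e)

lemma JD_cont (e : V2) : Continuous (fun η => JD η e) := by unfold JD; fun_prop

lemma JJ_line (η e : V2) : HasDerivAt (fun t : ℝ => JJ (η + t • e)) (JD η e) 0 := by
  have h : HasDerivAt (fun t : ℝ => η + t • e) e 0 := by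
    simpa using ((hasDerivAt_id (0:ℝ)).smul_const e).const_add η
  have h2 := ((h.norm_sq).const_mul ((2 * Real.pi) ^ 2)).const_add 1
  simp only [zero_smul, add_zero] at h2
  have e : (fun t : ℝ => JJ (η + t • e)) = fun t : ℝ => 1 + (2 * Real.pi) ^ 2 * ‖η + t • e‖ ^ 2 := by
    ext t; unfold JJ; ring
  rw [e]; exact h2

lemma JJ_line' (ξ η e : V2) : HasDerivAt (fun t : ℝ => JJ (ξ - (η + t • e))) (-JD (ξ - η) e) 0 := by
  have := JJ_line (ξ - η) (-e)
  have e1 : JD (ξ - η) (-e) = -JD (ξ - η) e := by simp [JD, inner_neg_right]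
  rw [e1] at this
  convert! this using 3
  rw [smul_neg]; abel

lemma JD_le (η e : V2) (he : ‖e‖ = 1) : |JD η e| ≤ 4 * Real.pi * √(JJ η) := by
  have h1 : |inner ℝ η e| ≤ ‖η‖ := by simpa [he] using abs_real_inner_le_norm η e
  have h2 : 2 * Real.pi * ‖η‖ ≤ √(JJ η) := by
    apply Real.le_sqrt_of_sq_le; unfold JJ; linarith
  have hp := Real.pi_pos
  unfold JD
  rw [abs_mul, abs_mul, abs_of_pos (by positivity : (0:ℝ) < (2 * Real.pi)^2), abs_of_pos (by norm_num : (0:ℝ) < 2)]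
  calc (2 * Real.pi) ^ 2 * (2 * |inner ℝ η e|) ≤ (2 * Real.pi) ^ 2 * (2 * ‖η‖) := by gcongr
    _ = 4 * Real.pi * (2 * Real.pi * ‖η‖) := by ring
    _ ≤ _ := by gcongr

def QQ (ξ η : V2) : ℝ := JJ (ξ - η) / DD ξ η
def QD (e ξ η : V2) : ℝ := (-JD (ξ - η) e * DD ξ η - JJ (ξ - η) * (-JD (ξ - η) e + JD η e)) / DD ξ η ^ 2

lemma QQ_line (e ξ η : V2) : HasLineDerivAt ℝ (QQ ξ) (QD e ξ η) η e := by
  have h1 := JJ_line' ξ η e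
  have h2 := h1.add (JJ_line η e)
  have := h1.div h2 (by
    have := (DD_pos ξ (η + (0:ℝ) • e)).ne'
    exact this)
  unfold HasLineDerivAt
  convert! this using 1
  simp [QD, DD]

lemma QQ_cont (ξ : V2) : Continuous (QQ ξ) := by
  unfold QQ
  exact (JJ_cont.comp (by fun_prop)).div (DD_cont ξ) (fun η => (DD_pos ξ η).ne')

lemma QD_cont (e ξ : V2) : Continuous (QD e ξ) := by
  unfold QD
  have h1 := DD_cont ξ
  have h2 : Continuous fun η => JD (ξ - η) e := (JD_cont e).comp (by fun_prop)
  have h3 : Continuous fun η => JJ (ξ - η) := JJ_cont.comp (by fun_prop)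
  have h4 := JD_cont e
  exact (((h2.neg).mul h1).sub (h3.mul (h2.neg.add h4))).div (h1.pow 2) (fun η => (pow_pos (DD_pos ξ η) 2).ne')

lemma QQ_nonneg (ξ η : V2) : 0 ≤ QQ ξ η := div_nonneg (JJ_pos _).le (DD_pos _ _).le
lemma QQ_le (ξ η : V2) : QQ ξ η ≤ 1 := by
  unfold QQ; rw [div_le_one (DD_pos _ _)]; unfold DD; linarith [JJ_pos η]
lemma one_sub_QQ (ξ η : V2) : 1 - QQ ξ η = JJ η / DD ξ η := by
  unfold QQ; rw [one_sub_div (DD_pos _ _).ne']; unfold DD; ring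

lemma QD_le (e ξ η : V2) (he : ‖e‖ = 1) : |QD e ξ η| ≤ 12 * Real.pi / √(DD ξ η) := by
  have hD := DD_pos ξ η
  have hp := Real.pi_pos
  have hs : 0 < √(DD ξ η) := Real.sqrt_pos.2 hD
  have a1 : |JD (ξ - η) e| ≤ 4 * Real.pi * √(DD ξ η) := (JD_le _ e he).trans (by
    gcongr; unfold DD; linarith [JJ_pos η])
  have a2 : |JD η e| ≤ 4 * Real.pi * √(DD ξ η) := (JD_le _ e he).trans (by
    gcongr; unfold DD; linarith [JJ_pos (ξ - η)])
  have a3 : JJ (ξ - η) ≤ DD ξ η := by unfold DD; linarith [JJ_pos η]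
  unfold QD
  rw [abs_div, abs_of_pos (pow_pos hD 2), div_le_div_iff₀ (pow_pos hD 2) hs]
  have n1 : |-JD (ξ - η) e * DD ξ η - JJ (ξ - η) * (-JD (ξ - η) e + JD η e)| ≤ 12 * Real.pi * √(DD ξ η) * DD ξ η := by
    calc _ ≤ |-JD (ξ - η) e * DD ξ η| + |JJ (ξ - η) * (-JD (ξ - η) e + JD η e)| := abs_sub _ _
      _ ≤ |JD (ξ - η) e| * DD ξ η + DD ξ η * (|JD (ξ - η) e| + |JD η e|) := by
        rw [abs_mul, abs_mul, abs_neg, abs_of_pos hD, abs_of_pos (JJ_pos _)]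
        gcongr
        refine (abs_add_le _ _).trans ?_
        rw [abs_neg]
      _ ≤ (4 * Real.pi * √(DD ξ η)) * DD ξ η + DD ξ η * ((4 * Real.pi * √(DD ξ η)) + (4 * Real.pi * √(DD ξ η))) := by gcongr
      _ = _ := by ring
  calc _ ≤ (12 * Real.pi * √(DD ξ η) * DD ξ η) * √(DD ξ η) := by gcongr
    _ = 12 * Real.pi * (√(DD ξ η) * √(DD ξ η)) * DD ξ η := by ring
    _ = _ := by rw [Real.mul_self_sqrt hD.le]; ring

lemma QD_bdd (e ξ η : V2) (he : ‖e‖ = 1) : |QD e ξ η| ≤ 12 * Real.pi := by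
  refine (QD_le e ξ η he).trans ?_
  have hp := Real.pi_pos
  apply div_le_self (by positivity)
  rw [Real.one_le_sqrt]; unfold DD; linarith [JJ_ge η, JJ_ge (ξ - η)]

open SchwartzMap in
lemma key_identity (a b a' b' : 𝓢(V2, ℂ)) (e : V2) (he : ‖e‖ = 1) (c : ℂ) (hc : c ≠ 0)
    (ha : ∀ x, fderiv ℝ a x e = c * a' x) (hb : ∀ x, fderiv ℝ b x e = c * b' x) (ξ : V2) :
    ∫ η, a' (ξ - η) * b η = ∫ η, (a' (ξ - η) * b η * ((1 - QQ ξ η : ℝ) : ℂ)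
      + a (ξ - η) * b' η * (QQ ξ η : ℂ) + c⁻¹ * (a (ξ - η) * b η * (QD e ξ η : ℂ))) := by
  have hint : ∀ (f g : 𝓢(V2, ℂ)) (m : V2 → ℝ), Continuous m → (∃ K, ∀ η, |m η| ≤ K) →
      Integrable (fun η => f (ξ - η) * g η * (m η : ℂ)) := by
    rintro f g m hm ⟨K, hK⟩
    have h1 : Integrable (fun η => (f (ξ - η) * (m η : ℂ)) * g η) := by
      apply g.integrable.bdd_mul (c := SchwartzMap.seminorm ℝ 0 0 f * K)
      · exact ((f.continuous.comp (by fun_prop)).mul (Complex.continuous_ofReal.comp hm)).aestronglyMeasurable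
      · refine Filter.Eventually.of_forall (fun η => ?_)
        rw [norm_mul, Complex.norm_real, Real.norm_eq_abs]
        exact mul_le_mul (norm_le_seminorm ℝ f _) (hK η) (abs_nonneg _) (by positivity)
    refine h1.congr (Filter.Eventually.of_forall fun η => ?_)
    ring
  have bQ : ∃ K, ∀ η, |QQ ξ η| ≤ K := ⟨1, fun η => by rw [abs_of_nonneg (QQ_nonneg _ _)]; exact QQ_le _ _⟩
  have bQ' : ∃ K, ∀ η, |1 - QQ ξ η| ≤ K := ⟨1, fun η => by
    rw [abs_of_nonneg (by linarith [QQ_le ξ η])]; linarith [QQ_nonneg ξ η]⟩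
  have bD : ∃ K, ∀ η, |QD e ξ η| ≤ K := ⟨_, fun η => QD_bdd e ξ η he⟩
  have i1 := hint a' b (fun η => 1 - QQ ξ η) (continuous_const.sub (QQ_cont ξ)) bQ'
  have i1' := hint a' b _ (QQ_cont ξ) bQ
  have i2 := hint a b' _ (QQ_cont ξ) bQ
  have i3 := hint a b _ (QD_cont e ξ) bD
  have i0 := hint a b _ (QQ_cont ξ) bQ
  have dline : ∀ (f : 𝓢(V2, ℂ)) x, HasLineDerivAt ℝ f (fderiv ℝ f x e) x e := fun f x =>
    f.differentiableAt.hasFDerivAt.hasLineDerivAt e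
  have ibp := integral_bilinear_hasLineDerivAt_right_eq_neg_left_of_integrable (μ := (volume : Measure V2))
    (B := ContinuousLinearMap.mul ℝ ℂ) (f := fun η => a (ξ - η)) (f' := fun η => -(c * a' (ξ - η)))
    (g := fun η => (QQ ξ η : ℂ) * b η) (g' := fun η => (QD e ξ η : ℂ) * b η + (QQ ξ η : ℂ) * (c * b' η)) (v := e)
    (by
      refine (i1'.const_mul (-c)).congr (Filter.Eventually.of_forall fun η => ?_)
      simp only [ContinuousLinearMap.mul_apply']; ring)
    (by
      refine (i3.add (i2.const_mul c)).congr (Filter.Eventually.of_forall fun η => ?_)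
      simp only [ContinuousLinearMap.mul_apply', Pi.add_apply]; ring)
    (by
      refine i0.congr (Filter.Eventually.of_forall fun η => ?_)
      simp only [ContinuousLinearMap.mul_apply']; ring)
    (by
      intro η _
      have h := (a.differentiableAt (x := ξ - η)).hasFDerivAt.comp η ((hasFDerivAt_id η).const_sub ξ)
      have := h.hasLineDerivAt e
      simpa [ha] using! this)
    (by
      intro η _
      have h1 := QQ_line e ξ η
      have h2 := dline b η
      rw [hb] at h2
      unfold HasLineDerivAt at h1 h2 ⊢
      have h3 := h1.ofReal_comp.mul h2
      simpa using! h3)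
  simp only [ContinuousLinearMap.mul_apply'] at ibp
  have l1 : ∫ η, a (ξ - η) * ((QD e ξ η : ℂ) * b η + (QQ ξ η : ℂ) * (c * b' η)) =
      (∫ η, a (ξ - η) * b η * (QD e ξ η : ℂ)) + c * ∫ η, a (ξ - η) * b' η * (QQ ξ η : ℂ) := by
    rw [← integral_const_mul, ← integral_add i3 (i2.const_mul c)]
    congr 1; ext η; ring
  have l2 : ∫ η, -(c * a' (ξ - η)) * ((QQ ξ η : ℂ) * b η) = -c * ∫ η, a' (ξ - η) * b η * (QQ ξ η : ℂ) := by
    rw [← integral_const_mul]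
    congr 1; ext η; ring
  rw [l1, l2] at ibp
  have i12 : Integrable (fun η => a' (ξ - η) * b η * ((1 - QQ ξ η : ℝ) : ℂ) + a (ξ - η) * b' η * (QQ ξ η : ℂ)) := i1.add i2
  rw [integral_add (i12) (i3.const_mul c⁻¹), integral_add i1 i2, integral_const_mul]
  have l3 : ∫ η, a' (ξ - η) * b η = (∫ η, a' (ξ - η) * b η * ((1 - QQ ξ η : ℝ) : ℂ)) + ∫ η, a' (ξ - η) * b η * (QQ ξ η : ℂ) := by
    rw [← integral_add i1 i1']
    congr 1; ext η; push_cast; ring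
  rw [l3, add_assoc]
  congr 1
  field_simp
  linear_combination -ibp

def HH (k T X : ℝ) : ℝ := X ^ ((1 - k) / 2) * (max X T) ^ (-k / 2)

lemma HH_nonneg {k T X : ℝ} (hX : 0 ≤ X) : 0 ≤ HH k T X :=
  mul_nonneg (Real.rpow_nonneg hX _) (Real.rpow_nonneg (le_max_of_le_left hX) _)

lemma HH_lower {k T X Y : ℝ} (hk : 1 < k) (hX : 1 ≤ X) (hXY : X ≤ Y) (hT : T ≤ max X Y) :
    X ^ ((1 - k) / 2) * Y ^ (-k / 2) ≤ HH k T X := by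
  unfold HH
  have : max X T ≤ Y := max_le hXY (by rwa [max_eq_right hXY] at hT)
  have h0 : 0 < max X T := lt_of_lt_of_le (by linarith) (le_max_left X T)
  gcongr ?_ * ?_
  exact Real.rpow_le_rpow_of_nonpos h0 this (by linarith)

lemma kb1 {k T X Y : ℝ} (hk : 1 < k) (hX : 1 ≤ X) (hY : 1 ≤ Y) (hT : T ≤ max X Y) :
    Y / (X + Y) * (X ^ ((1 - k) / 2) * Y ^ (-k / 2)) ≤ HH k T X + HH k T Y := by
  have hX0 : 0 < X := by linarith
  have hY0 : 0 < Y := by linarith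
  have nX := HH_nonneg (k := k) (T := T) hX0.le
  have nY := HH_nonneg (k := k) (T := T) hY0.le
  rcases le_total X Y with h | h
  · have := HH_lower hk hX h hT
    have h1 : Y / (X + Y) ≤ 1 := by rw [div_le_one (by positivity)]; linarith
    have : Y / (X + Y) * (X ^ ((1 - k) / 2) * Y ^ (-k / 2)) ≤ X ^ ((1 - k) / 2) * Y ^ (-k / 2) :=
      mul_le_of_le_one_left (by positivity) h1
    linarith
  · have := HH_lower hk hY h (le_of_le_of_eq hT (max_comm _ _))
    have h1 : Y / (X + Y) ≤ Y / X := by gcongr; linarith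
    have h2 : Y / X * (X ^ ((1 - k) / 2) * Y ^ (-k / 2)) = (Y ^ ((1 - k) / 2) * X ^ (-k / 2)) * (Y / X) ^ (1/2 : ℝ) := by
      rw [Real.div_rpow hY0.le hX0.le]
      have e1 : X ^ ((1 - k) / 2) = X ^ (-k / 2) * X ^ (1/2:ℝ) := by rw [← Real.rpow_add hX0]; ring_nf
      have e2 : Y ^ ((1 - k) / 2) = Y ^ (-k / 2) * Y ^ (1/2:ℝ) := by rw [← Real.rpow_add hY0]; ring_nf
      have e3 : X = X ^ (1/2:ℝ) * X ^ (1/2:ℝ) := by rw [← Real.rpow_add hX0]; norm_num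
      have e4 : Y = Y ^ (1/2:ℝ) * Y ^ (1/2:ℝ) := by rw [← Real.rpow_add hY0]; norm_num
      have p3 : 0 < X ^ (1/2:ℝ) := by positivity
      rw [e1, e2]
      generalize X ^ (-k/2) = A at *
      generalize Y ^ (-k/2) = B at *
      generalize X ^ (1/2:ℝ) = x at *
      generalize Y ^ (1/2:ℝ) = y at *
      rw [e3, e4]; field_simp
    have h3 : (Y / X) ^ (1/2 : ℝ) ≤ 1 := Real.rpow_le_one (by positivity) (by rwa [div_le_one hX0]) (by norm_num)
    have h4 : Y / (X + Y) * (X ^ ((1 - k) / 2) * Y ^ (-k / 2)) ≤ Y / X * (X ^ ((1 - k) / 2) * Y ^ (-k / 2)) := by gcongr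
    have h5 : (Y ^ ((1 - k) / 2) * X ^ (-k / 2)) * (Y / X) ^ (1/2 : ℝ) ≤ (Y ^ ((1 - k) / 2) * X ^ (-k / 2)) :=
      mul_le_of_le_one_right (by positivity) h3
    linarith

lemma kb3' {k T X Y : ℝ} (hk : 1 < k) (hX : 1 ≤ X) (hY : 1 ≤ Y) (hT : T ≤ max X Y) (h : X ≤ Y) :
    1 / √(X + Y) * (X ^ (-k / 2) * Y ^ (-k / 2)) ≤ HH k T X := by
  have h1 : 1 / √(X + Y) ≤ 1 := by
    rw [div_le_one (Real.sqrt_pos.2 (by linarith)), Real.one_le_sqrt]; linarith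
  have hX0 : 0 < X := by linarith
  have hY0 : 0 < Y := by linarith
  calc _ ≤ X ^ (-k / 2) * Y ^ (-k / 2) := mul_le_of_le_one_left (by positivity) h1
    _ ≤ X ^ ((1 - k) / 2) * Y ^ (-k / 2) := by gcongr ?_ * _; exact Real.rpow_le_rpow_of_exponent_le hX (by linarith)
    _ ≤ _ := HH_lower hk hX h hT

lemma kb3 {k T X Y : ℝ} (hk : 1 < k) (hX : 1 ≤ X) (hY : 1 ≤ Y) (hT : T ≤ max X Y) :
    1 / √(X + Y) * (X ^ (-k / 2) * Y ^ (-k / 2)) ≤ HH k T X + HH k T Y := by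
  have nX := HH_nonneg (k := k) (T := T) (X := X) (by linarith)
  have nY := HH_nonneg (k := k) (T := T) (X := Y) (by linarith)
  rcases le_total X Y with h | h
  · linarith [kb3' hk hX hY hT h]
  · have := kb3' hk hY hX (le_of_le_of_eq hT (max_comm _ _)) h
    rw [add_comm X Y, mul_comm (X ^ (-k / 2))]; linarith

def gg (k t : ℝ) : ℝ := (t ^ (1 - k) * (max t (1/2)) ^ (-k)) ^ 2

lemma gg_int (k : ℝ) (hk1 : 1 < k) (hk2 : k < 2) : Integrable (fun u : V2 => gg k ‖u‖) := by
  rw [integrable_fun_norm_addHaar (volume : Measure V2)]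
  have hm : Measurable (fun y : ℝ => y ^ (Module.finrank ℝ V2 - 1) • gg k y) := by
    unfold gg; fun_prop
  rw [show Set.Ioi (0:ℝ) = Set.Ioc 0 1 ∪ Set.Ioi 1 from (Set.Ioc_union_Ioi_eq_Ioi zero_le_one).symm]
  have hf : Module.finrank ℝ V2 - 1 = 1 := by simp
  simp only [hf] at hm ⊢
  apply IntegrableOn.union
  · have h0 : IntegrableOn (fun y : ℝ => ((1/2:ℝ) ^ (-k)) ^ 2 * y ^ (3 - 2 * k)) (Set.Ioc 0 1) := by
      apply Integrable.const_mul
      have := (intervalIntegral.intervalIntegrable_rpow' (a := 0) (b := 1) (r := 3 - 2 * k) (by linarith))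
      rwa [intervalIntegrable_iff_integrableOn_Ioc_of_le zero_le_one] at this
    refine Integrable.mono' h0 hm.aestronglyMeasurable ?_
    filter_upwards [ae_restrict_mem measurableSet_Ioc] with y hy
    have hy0 : 0 < y := hy.1
    have e : y ^ (3 - 2 * k) = y * (y ^ (1 - k)) ^ 2 := by
      rw [← Real.rpow_natCast, ← Real.rpow_mul hy0.le]
      nth_rw 2 [← Real.rpow_one y]
      rw [← Real.rpow_add hy0]
      congr 1; push_cast; ring
    have h2 : (max y (1/2)) ^ (-k) ≤ (1/2:ℝ) ^ (-k) :=
      Real.rpow_le_rpow_of_nonpos (by norm_num) (le_max_right _ _) (by linarith)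
    have h3 : 0 ≤ (max y (1/2)) ^ (-k) := Real.rpow_nonneg (le_max_of_le_left hy0.le) _
    rw [e, Real.norm_of_nonneg (by unfold gg; simp only [smul_eq_mul]; positivity)]
    simp only [gg, smul_eq_mul, pow_one, mul_pow]
    calc y * ((y ^ (1-k)) ^ 2 * (max y (1/2) ^ (-k)) ^ 2) ≤ y * ((y ^ (1-k)) ^ 2 * ((1/2:ℝ) ^ (-k)) ^ 2) := by gcongr
      _ = _ := by ring
  · have h0 : IntegrableOn (fun y : ℝ => y ^ (3 - 4 * k)) (Set.Ioi 1) :=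
      integrableOn_Ioi_rpow_of_lt (by linarith) one_pos
    refine Integrable.mono' h0 hm.aestronglyMeasurable ?_
    filter_upwards [ae_restrict_mem measurableSet_Ioi] with y hy
    have hy1 : 1 < y := hy
    have hy0 : 0 < y := by linarith
    rw [Real.norm_of_nonneg (by unfold gg; simp only [smul_eq_mul]; positivity)]
    simp only [gg, smul_eq_mul, pow_one]
    rw [max_eq_left (by linarith), ← Real.rpow_add hy0, ← Real.rpow_natCast, ← Real.rpow_mul hy0.le, ← Real.rpow_one_add' hy0.le]
    · apply le_of_eq; congr 1; push_cast; ring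
    · push_cast; linarith

/-- one-variable kernel -/
def GG (k : ℝ) (ξ η : V2) : ℝ :=
  (2 * Real.pi * ‖ξ‖) ^ (2 * k - 2) * HH k ((2 * Real.pi * ‖ξ‖) ^ 2 / 4) (JJ η)

lemma GG_nonneg (k : ℝ) (ξ η : V2) : 0 ≤ GG k ξ η := by
  have := Real.pi_pos
  unfold GG
  exact mul_nonneg (by positivity) (HH_nonneg (JJ_pos η).le)

lemma GG_meas (k : ℝ) (ξ : V2) : Measurable (GG k ξ) := by
  unfold GG HH JJ; fun_prop

lemma GG_le (k : ℝ) (hk1 : 1 < k) (ξ η : V2) (hξ : ξ ≠ 0) (hη : η ≠ 0) :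
    GG k ξ η ^ 2 ≤ (‖ξ‖ ^ 2)⁻¹ * gg k ‖(‖ξ‖⁻¹ • η)‖ := by
  have hp := Real.pi_pos
  have hR : 0 < ‖ξ‖ := norm_pos_iff.2 hξ
  have hs : 0 < ‖η‖ := norm_pos_iff.2 hη
  set R := 2 * Real.pi * ‖ξ‖ with hRd
  have hR0 : 0 < R := by positivity
  set t := ‖(‖ξ‖⁻¹ • η)‖ with htd
  have ht : t = ‖ξ‖⁻¹ * ‖η‖ := by rw [htd, norm_smul, norm_inv, norm_norm]
  have ht0 : 0 < t := by rw [ht]; positivity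
  have hRt : 2 * Real.pi * ‖η‖ = R * t := by rw [ht, hRd]; field_simp
  have hJ : (R * t) ^ 2 ≤ JJ η := by unfold JJ; rw [hRt]; linarith
  have h1 : (JJ η) ^ ((1 - k) / 2) ≤ (R * t) ^ (1 - k) := by
    calc (JJ η) ^ ((1 - k) / 2) ≤ ((R * t) ^ 2) ^ ((1 - k) / 2) :=
        Real.rpow_le_rpow_of_nonpos (by positivity) hJ (by linarith)
      _ = _ := by
        rw [← Real.rpow_natCast, ← Real.rpow_mul (by positivity)]; congr 1; push_cast; ring
  have h2 : (max (JJ η) (R ^ 2 / 4)) ^ (-k / 2) ≤ (R * max t (1/2)) ^ (-k) := by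
    calc _ ≤ ((R * max t (1/2)) ^ 2) ^ (-k / 2) := by
          refine Real.rpow_le_rpow_of_nonpos (by positivity) ?_ (by linarith)
          rcases le_total t (1/2) with h | h
          · rw [max_eq_right h]; refine le_max_of_le_right ?_; apply le_of_eq; ring
          · rw [max_eq_left h]; exact le_max_of_le_left hJ
      _ = _ := by
        rw [← Real.rpow_natCast, ← Real.rpow_mul (by positivity)]; congr 1; push_cast; ring
  have h3 : GG k ξ η ≤ R⁻¹ * (t ^ (1 - k) * (max t (1/2)) ^ (-k)) := by
    unfold GG HH
    have hmx : 0 < max t (1/2) := lt_max_of_lt_left ht0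
    calc R ^ (2 * k - 2) * (JJ η ^ ((1 - k) / 2) * (max (JJ η) (R ^ 2 / 4)) ^ (-k / 2))
        ≤ R ^ (2 * k - 2) * ((R * t) ^ (1 - k) * (R * max t (1/2)) ^ (-k)) := by
          have := (JJ_pos η).le
          gcongr
      _ = (R ^ (2 * k - 2) * R ^ (1 - k) * R ^ (-k)) * (t ^ (1 - k) * (max t (1/2)) ^ (-k)) := by
          rw [Real.mul_rpow hR0.le ht0.le, Real.mul_rpow hR0.le hmx.le]; ring
      _ = _ := by
          rw [← Real.rpow_add hR0, ← Real.rpow_add hR0, ← Real.rpow_neg_one]; congr 2; ring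
  have h4 : R⁻¹ ≤ ‖ξ‖⁻¹ := by
    apply inv_anti₀ hR; rw [hRd]; nlinarith [Real.pi_gt_three]
  have hn : 0 ≤ t ^ (1 - k) * (max t (1/2)) ^ (-k) := by positivity
  calc GG k ξ η ^ 2 ≤ (‖ξ‖⁻¹ * (t ^ (1 - k) * (max t (1/2)) ^ (-k))) ^ 2 := by
        apply pow_le_pow_left₀ (GG_nonneg _ _ _)
        exact h3.trans (by gcongr)
    _ = _ := by unfold gg; rw [mul_pow, inv_pow]

lemma GG_int (k : ℝ) (hk1 : 1 < k) (hk2 : k < 2) (ξ : V2) :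
    ∫⁻ η, ENNReal.ofReal (GG k ξ η) ^ 2 ≤ ENNReal.ofReal (∫ u : V2, gg k ‖u‖) := by
  by_cases hξ : ξ = 0
  · have : ∀ η, GG k ξ η = 0 := fun η => by
      unfold GG; rw [hξ, norm_zero, mul_zero, Real.zero_rpow (by linarith), zero_mul]
    simp [this]
  have hR : 0 < ‖ξ‖ := norm_pos_iff.2 hξ
  have hi := gg_int k hk1 hk2
  have hi2 : Integrable (fun η : V2 => gg k ‖(‖ξ‖⁻¹ • η)‖) :=
    (integrable_comp_smul_iff volume (fun u : V2 => gg k ‖u‖) (inv_ne_zero hR.ne')).2 hi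
  have hs := Measure.integral_comp_inv_smul_of_nonneg (volume : Measure V2) (fun u : V2 => gg k ‖u‖) hR.le
  calc ∫⁻ η, ENNReal.ofReal (GG k ξ η) ^ 2 ≤ ∫⁻ η : V2, ENNReal.ofReal ((‖ξ‖ ^ 2)⁻¹ * gg k ‖(‖ξ‖⁻¹ • η)‖) := by
        apply lintegral_mono_ae
        have : ∀ᵐ η : V2, η ≠ 0 := by simp [ae_iff]
        filter_upwards [this] with η hη
        rw [← ENNReal.ofReal_pow (GG_nonneg _ _ _)]
        exact ENNReal.ofReal_le_ofReal (GG_le k hk1 ξ η hξ hη)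
    _ = ENNReal.ofReal (∫ η : V2, (‖ξ‖ ^ 2)⁻¹ * gg k ‖(‖ξ‖⁻¹ • η)‖) := by
        rw [ofReal_integral_eq_lintegral_ofReal (hi2.const_mul _)]
        exact Filter.Eventually.of_forall fun η => by unfold gg; positivity
    _ = _ := by
        rw [integral_const_mul, hs]
        congr 1
        simp only [finrank_euclideanSpace, Fintype.card_fin, smul_eq_mul]
        field_simp

lemma eL2 {E : Type*} [NormedAddCommGroup E] (f : V2 → E) :
    eLpNorm f 2 volume ^ 2 = ∫⁻ x, ‖f x‖ₑ ^ 2 := by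
  have := eLpNorm_nnreal_pow_eq_lintegral (f := f) (μ := (volume : Measure V2)) (p := 2) (by norm_num)
  simpa using this

open SchwartzMap in
lemma mul_memLp (f : 𝓢(V2, ℂ)) (m : V2 → ℝ) (hm : Measurable m) (hJ : ∀ ξ, |m ξ| ≤ JJ ξ) :
    Integrable (fun ξ => (m ξ : ℂ) * f ξ) ∧ MemLp (fun ξ => (m ξ : ℂ) * f ξ) 2 volume := by
  have hp := Real.pi_gt_three
  have ht : (fun x : V2 => 1 + ‖x‖ ^ 2).HasTemperateGrowth := by fun_prop
  set h : 𝓢(V2, ℂ) := smulLeftCLM ℂ (fun x : V2 => 1 + ‖x‖ ^ 2) f with hh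
  have hha : ∀ x, h x = ((1 + ‖x‖ ^ 2 : ℝ) : ℂ) * f x := fun x => by
    rw [hh, smulLeftCLM_apply_apply ht]; simp
  have hms : AEStronglyMeasurable (fun ξ => (m ξ : ℂ) * f ξ) volume :=
    ((Complex.measurable_ofReal.comp hm).mul f.continuous.measurable).aestronglyMeasurable
  have hb : ∀ ξ, ‖(m ξ : ℂ) * f ξ‖ ≤ (2 * Real.pi) ^ 2 * ‖h ξ‖ := by
    intro ξ
    rw [hha, norm_mul, norm_mul, Complex.norm_real, Complex.norm_real, Real.norm_eq_abs, Real.norm_of_nonneg (by positivity), ← mul_assoc]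
    gcongr
    refine (hJ ξ).trans ?_
    unfold JJ; nlinarith
  constructor
  · exact (h.integrable.norm.const_mul ((2 * Real.pi) ^ 2)).mono' hms (Filter.Eventually.of_forall hb)
  · exact (h.memLp 2 volume).of_le_mul hms (Filter.Eventually.of_forall hb)

lemma JJ_rpow_le (s : ℝ) (hs1 : s ≤ 1) (ξ : V2) : |JJ ξ ^ s| ≤ JJ ξ := by
  rw [abs_of_nonneg (Real.rpow_nonneg (JJ_pos ξ).le _)]
  simpa using Real.rpow_le_rpow_of_exponent_le (JJ_ge ξ) hs1

open SchwartzMap in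
lemma jap_norm (f : 𝓢(V2, ℂ)) (s : ℝ) (hs : s ≤ 2) :
    eLpNorm (japMul s f) 2 volume ^ 2 = ∫⁻ ξ, (ENNReal.ofReal (JJ ξ ^ (s / 2)) * ‖(𝓕 f : 𝓢(V2, ℂ)) ξ‖ₑ) ^ 2 := by
  obtain ⟨h1, h2⟩ := mul_memLp (𝓕 f : 𝓢(V2, ℂ)) (fun ξ => JJ ξ ^ (s / 2))
    ((JJ_cont.measurable).pow_const _) (JJ_rpow_le _ (by linarith))
  have e : japMul s f = 𝓕⁻ (fun ξ => ((JJ ξ ^ (s / 2) : ℝ) : ℂ) * (𝓕 f : 𝓢(V2, ℂ)) ξ) := rfl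
  rw [e, planch _ h1 h2, eL2]
  congr 1; ext ξ
  rw [enorm_mul, ← ofReal_norm, Complex.norm_real, Real.norm_of_nonneg (Real.rpow_nonneg (JJ_pos ξ).le _)]

open SchwartzMap in
lemma om_norm (f : 𝓢(V2, ℂ)) (k : ℝ) (hk1 : 1 < k) (hk2 : k < 2) :
    eLpNorm (omMul (2 * k - 2) f) 2 volume ^ 2 =
      ∫⁻ ξ, (ENNReal.ofReal ((2 * Real.pi * ‖ξ‖) ^ (2 * k - 2)) * ‖𝓕 (f : V2 → ℂ) ξ‖ₑ) ^ 2 := by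
  have hp := Real.pi_pos
  obtain ⟨h1, h2⟩ := mul_memLp (𝓕 f : 𝓢(V2, ℂ)) (fun ξ => (2 * Real.pi * ‖ξ‖) ^ (2 * k - 2))
    (by fun_prop) (by
      intro ξ
      rw [abs_of_nonneg (by positivity)]
      have e : (2 * Real.pi * ‖ξ‖) ^ (2 * k - 2) = ((2 * Real.pi * ‖ξ‖) ^ 2) ^ (k - 1) := by
        rw [← Real.rpow_natCast, ← Real.rpow_mul (by positivity)]; congr 1; push_cast; ring
      rw [e]
      calc ((2 * Real.pi * ‖ξ‖) ^ 2) ^ (k - 1) ≤ JJ ξ ^ (k - 1) := by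
            apply Real.rpow_le_rpow (by positivity) _ (by linarith)
            unfold JJ; linarith
        _ ≤ JJ ξ := by simpa using Real.rpow_le_rpow_of_exponent_le (JJ_ge ξ) (by linarith : k - 1 ≤ 1))
  have e : omMul (2 * k - 2) f = 𝓕⁻ (fun ξ => (((2 * Real.pi * ‖ξ‖) ^ (2 * k - 2) : ℝ) : ℂ) * (𝓕 f : 𝓢(V2, ℂ)) ξ) := rfl
  rw [e, planch _ h1 h2, eL2]
  congr 1; ext ξ
  rw [enorm_mul, ← ofReal_norm, Complex.norm_real, Real.norm_of_nonneg (by positivity)]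
  rfl

/-- weighted size on the Fourier side -/
def WW (s : ℝ) (f : V2 → ℂ) (ξ : V2) : ℝ≥0∞ := ENNReal.ofReal (JJ ξ ^ (s / 2)) * ‖f ξ‖ₑ

lemma WW_meas (s : ℝ) (f : SchwartzMap V2 ℂ) : Measurable (WW s f) := by
  unfold WW
  exact ((JJ_cont.measurable).pow_const _).ennreal_ofReal.mul f.continuous.measurable.enorm

lemma enorm_eq_WW (s : ℝ) (f : V2 → ℂ) (ξ : V2) : ‖f ξ‖ₑ = ENNReal.ofReal (JJ ξ ^ (-s / 2)) * WW s f ξ := by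
  unfold WW
  rw [← mul_assoc, ← ENNReal.ofReal_mul (Real.rpow_nonneg (JJ_pos ξ).le _), ← Real.rpow_add (JJ_pos ξ)]
  have : -s / 2 + s / 2 = 0 := by ring
  rw [this]; simp

open SchwartzMap in
lemma Vk_bounds (k : ℝ) (hk2 : k < 2) (v w : 𝓢(V2, ℂ)) (j : Fin 2) (hw : ∀ x, w x = (x j : ℂ) * v x) :
    (∫⁻ ξ, WW k (𝓕 v : 𝓢(V2, ℂ)) ξ ^ 2 ≤ VkNorm k (fun y => v y) ^ 2) ∧
    (∫⁻ ξ, WW (k - 1) (𝓕 w : 𝓢(V2, ℂ)) ξ ^ 2 ≤ VkNorm k (fun y => v y) ^ 2) := by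
  constructor
  · have := jap_norm v k hk2.le
    unfold WW
    rw [← this]
    gcongr
    exact le_sup_left
  · have := jap_norm w (k - 1) (by linarith)
    unfold WW
    rw [← this]
    gcongr
    refine le_trans ?_ le_sup_right
    have e : (w : V2 → ℂ) = fun y => (y j : ℂ) * v y := funext hw
    rw [e]
    apply eLpNorm_mono
    intro x
    exact PiLp.norm_apply_le ((WithLp.equiv 2 (Fin 2 → ℂ)).symm
      (fun j => japMul (k - 1) (fun y => (y j : ℂ) * v y) x)) j

lemma T_le (ξ η : V2) : (2 * Real.pi * ‖ξ‖) ^ 2 / 4 ≤ max (JJ (ξ - η)) (JJ η) := by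
  have hp := Real.pi_pos
  have h1 : ‖ξ‖ ≤ ‖ξ - η‖ + ‖η‖ := by simpa using norm_add_le (ξ - η) η
  have h2 : 2 * Real.pi * ‖ξ‖ ≤ 2 * Real.pi * ‖ξ - η‖ + 2 * Real.pi * ‖η‖ := by
    rw [← mul_add]; gcongr
  have h3 : 0 ≤ 2 * Real.pi * ‖ξ‖ := by positivity
  have h4 : (2 * Real.pi * ‖ξ‖) ^ 2 ≤ (2 * Real.pi * ‖ξ - η‖ + 2 * Real.pi * ‖η‖) ^ 2 := pow_le_pow_left₀ h3 h2 2
  have h5 : (2 * Real.pi * ‖ξ - η‖) ^ 2 ≤ max (JJ (ξ - η)) (JJ η) := le_max_of_le_left (by unfold JJ; linarith)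
  have h6 : (2 * Real.pi * ‖η‖) ^ 2 ≤ max (JJ (ξ - η)) (JJ η) := le_max_of_le_right (by unfold JJ; linarith)
  nlinarith [sq_nonneg (2 * Real.pi * ‖ξ - η‖ - 2 * Real.pi * ‖η‖)]

def MM (k : ℝ) (ξ η : V2) : ℝ≥0∞ := ENNReal.ofReal (GG k ξ (ξ - η) + GG k ξ η)

lemma term_le (k : ℝ) (f g : V2 → ℂ) (s t m : ℝ) (hm : 0 ≤ m) (ξ η : V2)
    (h : m * (JJ (ξ - η) ^ (-s / 2) * JJ η ^ (-t / 2)) ≤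
      HH k ((2 * Real.pi * ‖ξ‖) ^ 2 / 4) (JJ (ξ - η)) + HH k ((2 * Real.pi * ‖ξ‖) ^ 2 / 4) (JJ η)) :
    ENNReal.ofReal ((2 * Real.pi * ‖ξ‖) ^ (2 * k - 2)) * (‖f (ξ - η)‖ₑ * ‖g η‖ₑ * ENNReal.ofReal m) ≤
      MM k ξ η * (WW s f (ξ - η) * WW t g η) := by
  have hp := Real.pi_pos
  rw [enorm_eq_WW s f, enorm_eq_WW t g]
  have hX := Real.rpow_nonneg (JJ_pos (ξ - η)).le (-s / 2)
  have hY := Real.rpow_nonneg (JJ_pos η).le (-t / 2)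
  calc _ = ENNReal.ofReal ((2 * Real.pi * ‖ξ‖) ^ (2 * k - 2)) * (ENNReal.ofReal m * (ENNReal.ofReal (JJ (ξ - η) ^ (-s / 2)) * ENNReal.ofReal (JJ η ^ (-t / 2)))) * (WW s f (ξ - η) * WW t g η) := by ring
    _ = ENNReal.ofReal ((2 * Real.pi * ‖ξ‖) ^ (2 * k - 2) * (m * (JJ (ξ - η) ^ (-s / 2) * JJ η ^ (-t / 2)))) * (WW s f (ξ - η) * WW t g η) := by
        rw [ENNReal.ofReal_mul (by positivity), ENNReal.ofReal_mul hm, ENNReal.ofReal_mul hX]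
    _ ≤ _ := by
        unfold MM GG
        rw [← mul_add]
        gcongr

def SS (k : ℝ) (a b a' b' : V2 → ℂ) (ξ η : V2) : ℝ≥0∞ :=
  WW (k - 1) a' (ξ - η) * WW k b η + WW k a (ξ - η) * WW (k - 1) b' η + 6 * (WW k a (ξ - η) * WW k b η)

open SchwartzMap in
lemma pointwise (k : ℝ) (hk1 : 1 < k) (a b a' b' : 𝓢(V2, ℂ)) (e : V2) (he : ‖e‖ = 1)
    (ha : ∀ x, fderiv ℝ a x e = -(2 * Real.pi * I) * a' x) (hb : ∀ x, fderiv ℝ b x e = -(2 * Real.pi * I) * b' x) (ξ : V2) :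
    ENNReal.ofReal ((2 * Real.pi * ‖ξ‖) ^ (2 * k - 2)) * ‖∫ η, a' (ξ - η) * b η‖ₑ ≤ ∫⁻ η, MM k ξ η * SS k a b a' b' ξ η := by
  have hp := Real.pi_pos
  have hc : -(2 * Real.pi * I : ℂ) ≠ 0 := by
    simp [Complex.ofReal_ne_zero, hp.ne', Complex.I_ne_zero]
  rw [key_identity a b a' b' e he _ hc ha hb ξ]
  refine (mul_le_mul_right (enorm_integral_le_lintegral_enorm _) _).trans ?_
  rw [← lintegral_const_mul' _ _ ENNReal.ofReal_ne_top]
  apply lintegral_mono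
  intro η
  have hX := JJ_ge (ξ - η)
  have hY := JJ_ge η
  have hT := T_le ξ η
  have hQ := QQ_nonneg ξ η
  have hQ' : 0 ≤ 1 - QQ ξ η := by linarith [QQ_le ξ η]
  have en : ∀ r : ℝ, ‖(r : ℂ)‖ₑ = ENNReal.ofReal |r| := fun r => by
    rw [← ofReal_norm, Complex.norm_real, Real.norm_eq_abs]
  have t1 := term_le k a' b (k - 1) k (1 - QQ ξ η) hQ' ξ η (by
    have := kb1 hk1 hX hY hT
    rw [one_sub_QQ]; unfold DD
    rw [show -(k - 1) / 2 = (1 - k) / 2 by ring]; exact this)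
  have t2 := term_le k a b' k (k - 1) (QQ ξ η) hQ ξ η (by
    have := kb1 hk1 hY hX (le_of_le_of_eq hT (max_comm _ _))
    unfold QQ DD
    rw [show -(k - 1) / 2 = (1 - k) / 2 by ring, add_comm (JJ (ξ - η)) (JJ η), mul_comm (JJ (ξ - η) ^ _)]
    rw [add_comm (HH _ _ (JJ η))] at this
    exact this)
  have t3 := term_le k a b k k (1 / √(DD ξ η)) (by positivity) ξ η (kb3 hk1 hX hY hT)
  have hq : ‖(-(2 * Real.pi * I : ℂ))⁻¹‖ₑ * ‖(QD e ξ η : ℂ)‖ₑ ≤ 6 * ENNReal.ofReal (1 / √(DD ξ η)) := by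
    rw [← ofReal_norm, en, ← ENNReal.ofReal_mul (norm_nonneg _), show (6 : ℝ≥0∞) = ENNReal.ofReal 6 by simp,
      ← ENNReal.ofReal_mul (by norm_num)]
    apply ENNReal.ofReal_le_ofReal
    have n : ‖(-(2 * Real.pi * I : ℂ))⁻¹‖ = (2 * Real.pi)⁻¹ := by
      simp [abs_of_pos hp]
    rw [n]
    calc _ ≤ (2 * Real.pi)⁻¹ * (12 * Real.pi / √(DD ξ η)) := by
          gcongr; exact QD_le e ξ η he
      _ = _ := by field_simp; norm_num
  calc _ ≤ ENNReal.ofReal ((2 * Real.pi * ‖ξ‖) ^ (2 * k - 2)) * (‖a' (ξ - η)‖ₑ * ‖b η‖ₑ * ENNReal.ofReal (1 - QQ ξ η) +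
        ‖a (ξ - η)‖ₑ * ‖b' η‖ₑ * ENNReal.ofReal (QQ ξ η) + 6 * (‖a (ξ - η)‖ₑ * ‖b η‖ₑ * ENNReal.ofReal (1 / √(DD ξ η)))) := by
        refine mul_le_mul_right ?_ _
        refine (enorm_add_le _ _).trans (add_le_add ((enorm_add_le _ _).trans (add_le_add ?_ ?_)) ?_)
        · rw [enorm_mul, enorm_mul, en, abs_of_nonneg hQ']
        · rw [enorm_mul, enorm_mul, en, abs_of_nonneg hQ]
        · rw [enorm_mul, enorm_mul, enorm_mul]
          calc _ = (‖a (ξ - η)‖ₑ * ‖b η‖ₑ) * (‖(-(2 * Real.pi * I : ℂ))⁻¹‖ₑ * ‖(QD e ξ η : ℂ)‖ₑ) := by ring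
            _ ≤ (‖a (ξ - η)‖ₑ * ‖b η‖ₑ) * (6 * ENNReal.ofReal (1 / √(DD ξ η))) := by gcongr
            _ = _ := by ring
    _ = ENNReal.ofReal ((2 * Real.pi * ‖ξ‖) ^ (2 * k - 2)) * (‖a' (ξ - η)‖ₑ * ‖b η‖ₑ * ENNReal.ofReal (1 - QQ ξ η)) +
        ENNReal.ofReal ((2 * Real.pi * ‖ξ‖) ^ (2 * k - 2)) * (‖a (ξ - η)‖ₑ * ‖b' η‖ₑ * ENNReal.ofReal (QQ ξ η)) +
        6 * (ENNReal.ofReal ((2 * Real.pi * ‖ξ‖) ^ (2 * k - 2)) * (‖a (ξ - η)‖ₑ * ‖b η‖ₑ * ENNReal.ofReal (1 / √(DD ξ η)))) := by ring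
    _ ≤ _ := add_le_add (add_le_add t1 t2) (mul_le_mul_right t3 6)
    _ = _ := by unfold SS; ring

lemma cs2 (f g : V2 → ℝ≥0∞) (hf : Measurable f) (hg : Measurable g) :
    (∫⁻ x, f x * g x) ^ 2 ≤ (∫⁻ x, f x ^ 2) * ∫⁻ x, g x ^ 2 := by
  have h := ENNReal.lintegral_mul_le_Lp_mul_Lq (volume : Measure V2) Real.HolderConjugate.two_two hf.aemeasurable hg.aemeasurable
  have e : ∀ x : ℝ≥0∞, (x ^ (1 / 2 : ℝ)) ^ 2 = x := fun x => by
    rw [← ENNReal.rpow_natCast, ← ENNReal.rpow_mul]; norm_num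
  simp only [Pi.mul_apply, ENNReal.rpow_two] at h
  calc _ ≤ _ := pow_le_pow_left₀ (zero_le) h 2
    _ = _ := by rw [mul_pow, e, e]

lemma sq_add_le2 (x y : ℝ≥0∞) : (x + y) ^ 2 ≤ 2 * (x ^ 2 + y ^ 2) := by
  have := ENNReal.rpow_add_le_mul_rpow_add_rpow x y (p := 2) (by norm_num)
  have e : (2:ℝ) - 1 = 1 := by norm_num
  rw [e, ENNReal.rpow_one] at this
  simpa only [ENNReal.rpow_two] using this

lemma sq_add_le3 (x y z : ℝ≥0∞) : (x + y + z) ^ 2 ≤ 4 * (x ^ 2 + y ^ 2 + z ^ 2) := by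
  calc _ ≤ 2 * ((x + y) ^ 2 + z ^ 2) := sq_add_le2 _ _
    _ ≤ 2 * (2 * (x ^ 2 + y ^ 2) + 2 * z ^ 2) := by
      gcongr
      · exact sq_add_le2 _ _
      · exact le_mul_of_one_le_left zero_le (by norm_num)
    _ = _ := by ring

lemma MM_int (k : ℝ) (hk1 : 1 < k) (hk2 : k < 2) (ξ : V2) :
    ∫⁻ η, MM k ξ η ^ 2 ≤ 4 * ENNReal.ofReal (∫ u : V2, gg k ‖u‖) := by
  have hm : Measurable fun η => ENNReal.ofReal (GG k ξ η) ^ 2 := (GG_meas k ξ).ennreal_ofReal.pow_const 2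
  have hG := GG_int k hk1 hk2 ξ
  calc _ ≤ ∫⁻ η, 2 * (ENNReal.ofReal (GG k ξ (ξ - η)) ^ 2 + ENNReal.ofReal (GG k ξ η) ^ 2) := by
        apply lintegral_mono; intro η
        unfold MM
        simp only
        rw [ENNReal.ofReal_add (GG_nonneg _ _ _) (GG_nonneg _ _ _)]
        exact sq_add_le2 _ _
    _ = 2 * ((∫⁻ η, ENNReal.ofReal (GG k ξ (ξ - η)) ^ 2) + ∫⁻ η, ENNReal.ofReal (GG k ξ η) ^ 2) := by
        rw [lintegral_const_mul' _ _ (by simp), lintegral_add_right _ hm]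
    _ = 2 * ((∫⁻ η, ENNReal.ofReal (GG k ξ η) ^ 2) + ∫⁻ η, ENNReal.ofReal (GG k ξ η) ^ 2) := by
        rw [lintegral_sub_left_eq_self (fun η => ENNReal.ofReal (GG k ξ η) ^ 2) ξ]
    _ ≤ 2 * (ENNReal.ofReal (∫ u : V2, gg k ‖u‖) + ENNReal.ofReal (∫ u : V2, gg k ‖u‖)) := by gcongr
    _ = _ := by ring

lemma conv_sq (p q : V2 → ℝ≥0∞) (hp : Measurable p) (hq : Measurable q) :
    ∫⁻ ξ, ∫⁻ η, (p (ξ - η) * q η) ^ 2 = (∫⁻ x, p x ^ 2) * ∫⁻ x, q x ^ 2 := by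
  rw [lintegral_lintegral_swap]
  · simp_rw [mul_pow]
    have : ∀ η : V2, ∫⁻ ξ, p (ξ - η) ^ 2 * q η ^ 2 = (∫⁻ x, p x ^ 2) * q η ^ 2 := fun η => by
      rw [lintegral_mul_const _ (by fun_prop), lintegral_sub_right_eq_self (fun x => p x ^ 2) η]
    simp_rw [this]
    rw [lintegral_const_mul _ (by fun_prop)]
  · apply Measurable.aemeasurable
    unfold Function.uncurry
    fun_prop

lemma SS_int (k : ℝ) (a b a' b' : SchwartzMap V2 ℂ) (A B : ℝ≥0∞)
    (h1 : ∫⁻ ξ, WW k a ξ ^ 2 ≤ A ^ 2) (h2 : ∫⁻ ξ, WW (k - 1) a' ξ ^ 2 ≤ A ^ 2)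
    (h3 : ∫⁻ ξ, WW k b ξ ^ 2 ≤ B ^ 2) (h4 : ∫⁻ ξ, WW (k - 1) b' ξ ^ 2 ≤ B ^ 2) :
    ∫⁻ ξ, ∫⁻ η, SS k a b a' b' ξ η ^ 2 ≤ 152 * (A ^ 2 * B ^ 2) := by
  have m1 := WW_meas k a
  have m2 := WW_meas (k - 1) a'
  have m3 := WW_meas k b
  have m4 := WW_meas (k - 1) b'
  calc _ ≤ ∫⁻ ξ, ∫⁻ η, 4 * ((WW (k - 1) a' (ξ - η) * WW k b η) ^ 2 + (WW k a (ξ - η) * WW (k - 1) b' η) ^ 2 + 36 * (WW k a (ξ - η) * WW k b η) ^ 2) := by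
        apply lintegral_mono; intro ξ
        apply lintegral_mono; intro η
        refine (sq_add_le3 _ _ _).trans (le_of_eq ?_)
        simp only
        ring
    _ = 4 * ((∫⁻ ξ, ∫⁻ η, (WW (k - 1) a' (ξ - η) * WW k b η) ^ 2) + (∫⁻ ξ, ∫⁻ η, (WW k a (ξ - η) * WW (k - 1) b' η) ^ 2) + 36 * ∫⁻ ξ, ∫⁻ η, (WW k a (ξ - η) * WW k b η) ^ 2) := by
        have c : ∀ (p q : V2 → ℝ≥0∞) (hp : Measurable p) (hq : Measurable q), Measurable fun ξ : V2 => ∫⁻ η, (p (ξ - η) * q η) ^ 2 := by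
          intro p q hp hq
          apply Measurable.lintegral_prod_right'  (f := fun z : V2 × V2 => (p (z.1 - z.2) * q z.2) ^ 2)
          fun_prop
        have c1 := c _ _ m2 m3
        have c2 := c _ _ m1 m4
        have c3 := c _ _ m1 m3
        have : ∀ ξ : V2, ∫⁻ η, 4 * ((WW (k - 1) a' (ξ - η) * WW k b η) ^ 2 + (WW k a (ξ - η) * WW (k - 1) b' η) ^ 2 + 36 * (WW k a (ξ - η) * WW k b η) ^ 2) = 4 * ((∫⁻ η, (WW (k - 1) a' (ξ - η) * WW k b η) ^ 2) + (∫⁻ η, (WW k a (ξ - η) * WW (k - 1) b' η) ^ 2) + 36 * ∫⁻ η, (WW k a (ξ - η) * WW k b η) ^ 2) := by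
          intro ξ
          rw [lintegral_const_mul' _ _ (by simp), lintegral_add_left (by fun_prop), lintegral_add_left (by fun_prop), lintegral_const_mul' _ _ (by simp)]
        simp_rw [this]
        rw [lintegral_const_mul' _ _ (by simp), lintegral_add_left (by fun_prop), lintegral_add_left (by fun_prop), lintegral_const_mul' _ _ (by simp)]
    _ ≤ 4 * ((A ^ 2 * B ^ 2) + (A ^ 2 * B ^ 2) + 36 * (A ^ 2 * B ^ 2)) := by
        rw [conv_sq _ _ m2 m3, conv_sq _ _ m1 m4, conv_sq _ _ m1 m3]
        gcongr
    _ = _ := by ring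

/-- Estimate (3.14) of Lemma 3.2: in `ℝ²`, for `1 < k < 2`,
`‖ω^{2k−2}(x v₁ v₂)‖₂ ≤ C ‖v₁;V^k‖ ‖v₂;V^k‖` (componentwise in `x`). -/
theorem stmt_10 (k : ℝ) (hk1 : 1 < k) (hk2 : k < 2) :
    ∃ C : ℝ, 0 < C ∧ ∀ (v₁ v₂ : SchwartzMap V2 ℂ) (j : Fin 2),
      eLpNorm (omMul (2 * k - 2) (fun x => (x j : ℂ) * v₁ x * v₂ x)) 2 volume
        ≤ ENNReal.ofReal C * VkNorm k (fun y => v₁ y) * VkNorm k (fun y => v₂ y) := by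
  set K := ∫ u : V2, gg k ‖u‖ with hK
  have hK0 : 0 ≤ K := integral_nonneg fun u => by unfold gg; positivity
  refine ⟨√(608 * K + 1), by positivity, fun v₁ v₂ j => ?_⟩
  obtain ⟨w₁, hw₁, hd₁⟩ := exists_xmul v₁ j
  obtain ⟨w₂, hw₂, hd₂⟩ := exists_xmul v₂ j
  obtain ⟨b1, b2⟩ := Vk_bounds k hk2 v₁ w₁ j hw₁
  obtain ⟨b3, b4⟩ := Vk_bounds k hk2 v₂ w₂ j hw₂
  set A := VkNorm k (fun y => v₁ y)
  set B := VkNorm k (fun y => v₂ y)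
  set f : SchwartzMap V2 ℂ := SchwartzMap.pairing (ContinuousLinearMap.mul ℂ ℂ) w₁ v₂ with hf
  have hfe : (f : V2 → ℂ) = fun x => w₁ x * v₂ x := by ext x; simp [hf]
  have hfe' : (fun x : V2 => (x j : ℂ) * v₁ x * v₂ x) = (f : V2 → ℂ) := by
    rw [hfe]; ext x; rw [hw₁]
  rw [hfe', ← ENNReal.pow_le_pow_left_iff (n := 2) (by norm_num), om_norm f k hk1 hk2]
  have hSm : ∀ ξ : V2, Measurable (SS k (𝓕 v₁ : SchwartzMap V2 ℂ) (𝓕 v₂ : SchwartzMap V2 ℂ) (𝓕 w₁ : SchwartzMap V2 ℂ) (𝓕 w₂ : SchwartzMap V2 ℂ) ξ) := by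
    intro ξ
    have m1 := WW_meas k (𝓕 v₁ : SchwartzMap V2 ℂ)
    have m2 := WW_meas (k - 1) (𝓕 w₁ : SchwartzMap V2 ℂ)
    have m3 := WW_meas k (𝓕 v₂ : SchwartzMap V2 ℂ)
    have m4 := WW_meas (k - 1) (𝓕 w₂ : SchwartzMap V2 ℂ)
    unfold SS; fun_prop
  have hMm : ∀ ξ : V2, Measurable (MM k ξ) := by
    intro ξ
    have := GG_meas k ξ
    unfold MM; fun_prop
  calc _ ≤ ∫⁻ ξ, (4 * ENNReal.ofReal K) * ∫⁻ η, SS k (𝓕 v₁ : SchwartzMap V2 ℂ) (𝓕 v₂ : SchwartzMap V2 ℂ) (𝓕 w₁ : SchwartzMap V2 ℂ) (𝓕 w₂ : SchwartzMap V2 ℂ) ξ η ^ 2 := by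
        apply lintegral_mono; intro ξ
        simp only
        rw [hfe, fourier_mul w₁ v₂ ξ]
        have hpt := pointwise k hk1 (𝓕 v₁ : SchwartzMap V2 ℂ) (𝓕 v₂ : SchwartzMap V2 ℂ) (𝓕 w₁ : SchwartzMap V2 ℂ) (𝓕 w₂ : SchwartzMap V2 ℂ) (EuclideanSpace.single j 1) (by simp) hd₁ hd₂ ξ
        refine (pow_le_pow_left₀ zero_le hpt 2).trans ((cs2 _ _ (hMm ξ) (hSm ξ)).trans ?_)
        gcongr
        exact MM_int k hk1 hk2 ξ
    _ = (4 * ENNReal.ofReal K) * ∫⁻ ξ, ∫⁻ η, SS k (𝓕 v₁ : SchwartzMap V2 ℂ) (𝓕 v₂ : SchwartzMap V2 ℂ) (𝓕 w₁ : SchwartzMap V2 ℂ) (𝓕 w₂ : SchwartzMap V2 ℂ) ξ η ^ 2 :=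
        lintegral_const_mul' _ _ (ENNReal.mul_ne_top (by simp) ENNReal.ofReal_ne_top)
    _ ≤ (4 * ENNReal.ofReal K) * (152 * (A ^ 2 * B ^ 2)) := by
        gcongr
        exact SS_int k _ _ _ _ A B b1 b2 b3 b4
    _ = (608 * ENNReal.ofReal K) * (A ^ 2 * B ^ 2) := by ring
    _ ≤ ENNReal.ofReal (608 * K + 1) * (A ^ 2 * B ^ 2) := by
        gcongr
        rw [show (608 : ℝ≥0∞) = ENNReal.ofReal 608 by simp, ← ENNReal.ofReal_mul (by norm_num)]
        exact ENNReal.ofReal_le_ofReal (by linarith)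
    _ = (ENNReal.ofReal √(608 * K + 1) * A * B) ^ 2 := by
        rw [mul_pow, mul_pow, ← ENNReal.ofReal_pow (by positivity), Real.sq_sqrt (by positivity)]; ring
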